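/- Fix κ ∈ ℂ with κ ≠ 0 and real momenta p₁, p₂. Set A := 1 + exp(i(p₁+p₂)) and assume A ≠ 0, A − 2κ·exp(i p₁) ≠ 0 and A − 2κ⁻¹·exp(i p₁) ≠ 0. Then S(p₁,p₂,κ) = S(p₁,p₂,κ⁻¹) if and only if κ² = 1 or exp(i p₁) = exp(i p₂). In particular, away from the orbifold point (κ ≠ ±1) and for generic distinct momenta, the two scattering amplitudes S and S̃ = S(·,·,κ⁻¹) arising from the two orderings of the magnons are different, so the standard Yang–Baxter relation S S̃ S = S̃ S S̃ fails. -/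

import Mathlib

/-!
For fixed momenta the amplitude is a Möbius transformation of `κ` whose determinant is proportional
to `A * (x - y)`, where `x` and `y` are the exponentials of the momenta. If `A ≠ 0` and `x ≠ y`, it
is therefore injective in `κ`, so `S = S̃` forces `κ = κ⁻¹`.
-/

section Field

variable {K : Type*} [Field K]

theorem sub_mul_div_sub_mul_eq_iff {a s t x y : K} (ha : a ≠ 0)
    (hs : a - s * x ≠ 0) (ht : a - t * x ≠ 0) :
    (a - s * y) / (a - s * x) = (a - t * y) / (a - t * x) ↔ s = t ∨ x = y := by
  have cross_sub : (a - s * y) * (a - t * x) - (a - t * y) * (a - s * x) =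
      a * ((s - t) * (x - y)) := by
    ring
  rw [div_eq_div_iff hs ht, ← sub_eq_zero, cross_sub, mul_eq_zero_iff_left ha, mul_eq_zero,
    sub_eq_zero, sub_eq_zero]

/-- The two-magnon scattering amplitude `S(p₁, p₂, κ)`, as a function of `x = exp (i p₁)` and
`y = exp (i p₂)`, so that `A = 1 + x * y`. The amplitude `S̃` of the opposite ordering is its value
at `κ⁻¹`. When the denominator vanishes the value is the junk value `0`. -/
def scatteringAmplitude (x y κ : K) : K :=
  -(1 + x * y - 2 * κ * y) / (1 + x * y - 2 * κ * x)

theorem scatteringAmplitude_eq_iff [NeZero (2 : K)] {x y κ μ : K} (hA : 1 + x * y ≠ 0)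
    (hκ : 1 + x * y - 2 * κ * x ≠ 0) (hμ : 1 + x * y - 2 * μ * x ≠ 0) :
    scatteringAmplitude x y κ = scatteringAmplitude x y μ ↔ κ = μ ∨ x = y := by
  rw [scatteringAmplitude, scatteringAmplitude, neg_div, neg_div, neg_inj,
    sub_mul_div_sub_mul_eq_iff hA hκ hμ, mul_right_inj' two_ne_zero]

theorem scattering_amplitudes_differ_iff_general [NeZero (2 : K)] {x y κ : K} (hκ : κ ≠ 0)
    (hA : 1 + x * y ≠ 0) (h : 1 + x * y - 2 * κ * x ≠ 0)
    (h_inv : 1 + x * y - 2 * κ⁻¹ * x ≠ 0) :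
    scatteringAmplitude x y κ = scatteringAmplitude x y κ⁻¹ ↔ κ ^ 2 = 1 ∨ x = y := by
  rw [scatteringAmplitude_eq_iff hA h h_inv, ← mul_eq_one_iff_eq_inv₀ hκ, sq]

end Field

/-- The two scattering amplitudes `S(p₁,p₂,κ)` and `S̃ = S(p₁,p₂,κ⁻¹)` arising from
the two orderings of the magnons in the 'SU(2)' sector of the N=2 interpolating
quiver theory agree if and only if `κ² = 1` (the orbifold point) or
`e^{ip₁} = e^{ip₂}` (coincident momenta); hence generically `S ≠ S̃` and the
standard Yang–Baxter relation fails. -/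
theorem scattering_amplitudes_differ_iff (κ : ℂ) (hκ : κ ≠ 0) (p₁ p₂ : ℝ)
    (A : ℂ) (hA : A = 1 + Complex.exp (Complex.I * ((p₁ : ℂ) + (p₂ : ℂ))))
    (hA0 : A ≠ 0)
    (h1 : A - 2 * κ * Complex.exp (Complex.I * (p₁ : ℂ)) ≠ 0)
    (h2 : A - 2 * κ⁻¹ * Complex.exp (Complex.I * (p₁ : ℂ)) ≠ 0) :
    (-(A - 2 * κ * Complex.exp (Complex.I * (p₂ : ℂ))) /
        (A - 2 * κ * Complex.exp (Complex.I * (p₁ : ℂ))) =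
      -(A - 2 * κ⁻¹ * Complex.exp (Complex.I * (p₂ : ℂ))) /
        (A - 2 * κ⁻¹ * Complex.exp (Complex.I * (p₁ : ℂ)))) ↔
      (κ ^ 2 = 1 ∨
        Complex.exp (Complex.I * (p₁ : ℂ)) = Complex.exp (Complex.I * (p₂ : ℂ))) := by
  rw [mul_add, Complex.exp_add] at hA
  subst hA
  exact scattering_amplitudes_differ_iff_general hκ hA0 h1 h2
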